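/- Let d ≥ 3 and let Θ°_d = {(a,b,c) ∈ ℤ³ : a,b,c ≥ 1, a+b+c = d}. Let (E,F,G,H) and (E',F',G',H') be quadruples of flags in ℝ^d, each with the maximum span property. Suppose that X_{a,b,c}(E,F,G) = X_{a,b,c}(E',F',G') and X_{a,b,c}(E,H,F) = X_{a,b,c}(E',H',F') for all (a,b,c) ∈ Θ°_d, and Z_i(E,F,G,H) = Z_i(E',F',G',H') for all 0 < i < d. Then there exists g ∈ GL(d,ℝ) with g·E^(i) = E'^(i), g·F^(i) = F'^(i), g·G^(i) = G'^(i), and g·H^(i) = H'^(i) for all i. -/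

import Mathlib

noncomputable section

abbrev Vec (d : ℕ) : Type := Fin d → ℝ

/-- A complete flag in `ℝ^d`. -/
def IsFlag {d : ℕ} (F : ℕ → Submodule ℝ (Vec d)) : Prop :=
  Monotone F ∧ ∀ i, i ≤ d → Module.finrank ℝ (F i) = i

/-- The maximum span property for a tuple of flags. -/
def MaxSpan {d t : ℕ} (F : Fin t → ℕ → Submodule ℝ (Vec d)) : Prop :=
  ∀ a : Fin t → ℕ, (∀ j, a j ≤ d) →
    Module.finrank ℝ ↥(⨆ j, F j (a j)) = min (∑ j, a j) d

/-- The wedge product of the concatenated vectors, viewed as a real number via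
`⋀^d ℝ^d ≅ ℝ` (determinant in the standard basis); junk value `0` if the total
number of vectors is not `d`. -/
def wedgeDet {d n1 n2 n3 : ℕ} (u : Fin n1 → Vec d) (v : Fin n2 → Vec d)
    (w : Fin n3 → Vec d) : ℝ :=
  if h : n1 + n2 + n3 = d then
    (Matrix.of fun i j => (Fin.append (Fin.append u v) w) (Fin.cast h.symm j) i).det
  else 0

/-- A choice, for each `k ≤ d`, of a spanning `k`-tuple of vectors of the member
`F k` of a flag; equivalently a choice of a nonzero element of `⋀^k F^(k)`. -/
def ChoiceFor {d : ℕ} (F : ℕ → Submodule ℝ (Vec d)) (e : (k : ℕ) → Fin k → Vec d) : Prop :=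
  ∀ k, k ≤ d → Submodule.span ℝ (Set.range (e k)) = F k

/-- The `(a,b,c)`-triple ratio `X_{a,b,c}(E,F,G)` computed from choices. -/
def tripleRatio {d : ℕ} (a b c : ℕ) (e f g : (k : ℕ) → Fin k → Vec d) : ℝ :=
  (wedgeDet (e (a-1)) (f b) (g (c+1)) * wedgeDet (e a) (f (b+1)) (g (c-1)) *
   wedgeDet (e (a+1)) (f (b-1)) (g c)) /
  (wedgeDet (e (a+1)) (f b) (g (c-1)) * wedgeDet (e a) (f (b-1)) (g (c+1)) *
   wedgeDet (e (a-1)) (f (b+1)) (g c))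

/-- The `i`-th double ratio `Z_i(E,F,G,H)` computed from choices. -/
def doubleRatio {d : ℕ} (i : ℕ) (e g : (k : ℕ) → Fin k → Vec d) (f1 h1 : Vec d) : ℝ :=
  -((wedgeDet (e i) (g (d-i-1)) ![f1] * wedgeDet (e (i-1)) (g (d-i)) ![h1]) /
    (wedgeDet (e i) (g (d-i-1)) ![h1] * wedgeDet (e (i-1)) (g (d-i)) ![f1]))


lemma range_append' {α : Type*} {m n : ℕ} (u : Fin m → α) (v : Fin n → α) :
    Set.range (Fin.append u v) = Set.range u ∪ Set.range v := by
  ext x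
  constructor
  · rintro ⟨i, rfl⟩
    refine Fin.addCases (fun i => ?_) (fun i => ?_) i
    · simp
    · simp
  · rintro (⟨i, rfl⟩ | ⟨i, rfl⟩)
    · exact ⟨Fin.castAdd _ i, by simp⟩
    · exact ⟨Fin.natAdd _ i, by simp⟩

lemma wedgeDet_ne_zero_iff {d n1 n2 n3 : ℕ} (u : Fin n1 → Vec d) (v : Fin n2 → Vec d)
    (w : Fin n3 → Vec d) (h : n1 + n2 + n3 = d) :
    wedgeDet u v w ≠ 0 ↔ Submodule.span ℝ (Set.range u) ⊔ Submodule.span ℝ (Set.range v) ⊔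
      Submodule.span ℝ (Set.range w) = ⊤ := by
  subst h
  rw [wedgeDet, dif_pos rfl, ← Submodule.span_union, ← Submodule.span_union, ← range_append',
    ← range_append']
  set y := Fin.append (Fin.append u v) w
  have h1 : (Matrix.of fun i j => y (Fin.cast rfl j) i) = (Matrix.of y).transpose := rfl
  rw [h1, Matrix.det_transpose, ← isUnit_iff_ne_zero, ← Matrix.isUnit_iff_isUnit_det,
    ← Matrix.linearIndependent_rows_iff_isUnit]
  change LinearIndependent ℝ y ↔ _
  constructor
  · intro hl
    exact hl.span_eq_top_of_card_eq_finrank' (by simp)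
  · intro hs
    exact linearIndependent_of_top_le_span_of_card_eq_finrank hs.ge (by simp)

lemma det_update_linear {d : ℕ} (y : Fin d → Vec d) (j : Fin d) :
    ∃ φ : Vec d →ₗ[ℝ] ℝ, ∀ x, φ x = (Matrix.of fun i k => (Function.update y j x) k i).det := by
  refine ⟨(Matrix.detRowAlternating (R := ℝ) (n := Fin d)).toMultilinearMap.toLinearMap y j, ?_⟩
  intro x
  rw [← Matrix.det_transpose]
  rfl

lemma wedge_right_linear {d n1 n2 n3 : ℕ} (u : Fin n1 → Vec d) (v : Fin n2 → Vec d)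
    (w : Fin n3 → Vec d) (h : n1 + n2 + (n3 + 1) = d) :
    ∃ φ : Vec d →ₗ[ℝ] ℝ, ∀ x, φ x = wedgeDet u v (Fin.snoc w x : Fin (n3+1) → Vec d) := by
  subst h
  obtain ⟨φ, hφ⟩ := det_update_linear
    (Fin.append (Fin.append u v) (Fin.snoc w 0 : Fin (n3+1) → _)) (Fin.natAdd _ (Fin.last _))
  refine ⟨φ, fun x => ?_⟩
  rw [hφ, wedgeDet, dif_pos rfl]
  congr 2
  funext i k
  congr 1
  simp only [Fin.cast_eq_self]
  refine Fin.addCases (fun k => ?_) (fun k => ?_) k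
  · rw [Function.update_of_ne]
    · simp
    · intro hh
      have := congrArg Fin.val hh
      simp at this
      omega
  · by_cases hk : k = Fin.last _
    · subst hk; rw [Function.update_self, Fin.append_right, Fin.snoc_last]
    · rw [Function.update_of_ne (by
        intro hh; apply hk; have := congrArg Fin.val hh; ext; simp at this ⊢; omega)]
      obtain ⟨k', rfl⟩ := Fin.exists_castSucc_eq.2 hk
      simp

lemma wedge_mid_linear {d n1 n2 n3 : ℕ} (u : Fin n1 → Vec d) (v : Fin n2 → Vec d)
    (w : Fin n3 → Vec d) (h : n1 + (n2 + 1) + n3 = d) :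
    ∃ φ : Vec d →ₗ[ℝ] ℝ, ∀ x, φ x = wedgeDet u (Fin.snoc v x : Fin (n2+1) → Vec d) w := by
  subst h
  obtain ⟨φ, hφ⟩ := det_update_linear
    (Fin.append (Fin.append u (Fin.snoc v 0 : Fin (n2+1) → _)) w)
      (Fin.castAdd _ (Fin.natAdd _ (Fin.last _)))
  refine ⟨φ, fun x => ?_⟩
  rw [hφ, wedgeDet, dif_pos rfl]
  congr 2
  funext i k
  congr 1
  simp only [Fin.cast_eq_self]
  refine Fin.addCases (fun k => ?_) (fun k => ?_) k
  · refine Fin.addCases (fun k => ?_) (fun k => ?_) k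
    · rw [Function.update_of_ne]
      · simp
      · intro hh
        have := congrArg Fin.val hh
        simp at this
        omega
    · by_cases hk : k = Fin.last _
      · subst hk; rw [Function.update_self, Fin.append_left, Fin.append_right, Fin.snoc_last]
      · rw [Function.update_of_ne (by
          intro hh; apply hk; have := congrArg Fin.val hh; ext; simp at this ⊢; omega)]
        obtain ⟨k', rfl⟩ := Fin.exists_castSucc_eq.2 hk
        simp
  · rw [Function.update_of_ne]
    · simp
    · intro hh
      have := congrArg Fin.val hh
      simp at this
      omega

lemma wedgeDet_map {d n1 n2 n3 : ℕ} (T : Vec d ≃ₗ[ℝ] Vec d) (u : Fin n1 → Vec d)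
    (v : Fin n2 → Vec d) (w : Fin n3 → Vec d) :
    wedgeDet (fun i => T (u i)) (fun i => T (v i)) (fun i => T (w i)) =
      LinearMap.det (T : Vec d →ₗ[ℝ] Vec d) * wedgeDet u v w := by
  by_cases h : n1 + n2 + n3 = d
  · subst h
    rw [wedgeDet, wedgeDet, dif_pos rfl, dif_pos rfl]
    rw [← LinearMap.det_toMatrix', ← Matrix.det_mul]
    congr 1
    ext i j
    simp only [Fin.cast_eq_self, Matrix.of_apply, Matrix.mul_apply]
    have : ∀ x : Vec (n1+n2+n3), ∑ k, (LinearMap.toMatrix' (T : Vec (n1+n2+n3) →ₗ[ℝ] _)) i k * x k = T x i := by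
      intro x
      have := congrFun (LinearMap.toMatrix'_mulVec (T : Vec (n1+n2+n3) →ₗ[ℝ] _) x) i
      simpa [Matrix.mulVec, dotProduct] using this
    rw [this]
    refine Fin.addCases (fun k => ?_) (fun k => ?_) j
    · refine Fin.addCases (fun k => ?_) (fun k => ?_) k <;> simp
    · simp
  · simp [wedgeDet, h]

def Max3 {d : ℕ} (A B C : ℕ → Submodule ℝ (Vec d)) : Prop :=
  ∀ a b c, a ≤ d → b ≤ d → c ≤ d → Module.finrank ℝ ↥(A a ⊔ B b ⊔ C c) = min (a + b + c) d

lemma Max3.swap {d : ℕ} {A B C : ℕ → Submodule ℝ (Vec d)} (h : Max3 A B C) : Max3 A C B := by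
  intro a b c ha hb hc
  rw [sup_right_comm, h a c b ha hc hb]
  congr 1; omega

lemma Max3.top {d : ℕ} {A B C : ℕ → Submodule ℝ (Vec d)} (h : Max3 A B C) {a b c : ℕ}
    (hs : a + b + c = d) : A a ⊔ B b ⊔ C c = ⊤ := by
  apply Submodule.eq_top_of_finrank_eq
  rw [h a b c (by omega) (by omega) (by omega)]
  simp [hs]

lemma IsFlag.zero {d : ℕ} {A : ℕ → Submodule ℝ (Vec d)} (h : IsFlag A) : A 0 = ⊥ :=
  Submodule.finrank_eq_zero.1 (h.2 0 (by omega))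

lemma IsFlag.top {d : ℕ} {A : ℕ → Submodule ℝ (Vec d)} (h : IsFlag A) : A d = ⊤ := by
  apply Submodule.eq_top_of_finrank_eq
  rw [h.2 d le_rfl]; simp

/-- disjointness -/
lemma Max3.disj {d : ℕ} {A B C : ℕ → Submodule ℝ (Vec d)} (h : Max3 A B C)
    (hA : IsFlag A) (hB : IsFlag B) (hC : IsFlag C) {a b c : ℕ}
    (hs : a + b + c ≤ d) : (A a ⊔ C c) ⊓ B b = ⊥ := by
  apply Submodule.finrank_eq_zero.1
  have h1 := Submodule.finrank_sup_add_finrank_inf_eq (A a ⊔ C c) (B b)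
  have h2 := h a 0 c (by omega) (by omega) (by omega)
  rw [hB.zero, sup_bot_eq] at h2
  rw [sup_right_comm, h a b c (by omega) (by omega) (by omega), h2, hB.2 b (by omega)] at h1
  omega

lemma core {d : ℕ} {E F G : ℕ → Submodule ℝ (Vec d)} (hE : IsFlag E) (hF : IsFlag F)
    (hG : IsFlag G) (hm : Max3 E F G) {c : ℕ} (hc : c + 1 ≤ d) (w : Vec d)
    (hw : ∀ a b, a + b + c + 1 = d → w ∈ E a ⊔ F b ⊔ G c) : w ∈ G c := by
  have key : ∀ b a, a + b + c + 1 = d → w ∈ E a ⊔ G c := by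
    intro b
    induction b with
    | zero =>
      intro a ha
      have := hw a 0 (by omega)
      rwa [hF.zero, sup_bot_eq] at this
    | succ b ih =>
      intro a ha
      have h1 := ih (a+1) (by omega)
      have h2 := hw a (b+1) (by omega)
      have h3 : w ∈ ((E a ⊔ G c) ⊔ F (b+1)) ⊓ (E (a+1) ⊔ G c) := by
        refine ⟨?_, h1⟩
        rwa [sup_right_comm] at h2
      rw [sup_inf_assoc_of_le _ (sup_le_sup_right (hE.1 (Nat.le_succ a)) _), inf_comm,
        hm.disj hE hF hG (by omega), sup_bot_eq] at h3
      exact h3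
  have := key (d - c - 1) 0 (by omega)
  rwa [hE.zero, bot_sup_eq] at this

lemma step {d : ℕ} {E F G G' : ℕ → Submodule ℝ (Vec d)} (hE : IsFlag E) (hF : IsFlag F)
    (hG : IsFlag G) (hG' : IsFlag G') (hm : Max3 E F G) (hm' : Max3 E F G') {c : ℕ}
    (hc : c + 1 ≤ d) (hK : G c = G' c) (φ : ℕ → Vec d →ₗ[ℝ] ℝ)
    (hφ : ∀ a b, a + b + c + 1 = d → ∀ x,
      φ a x ≠ 0 ↔ E a ⊔ F b ⊔ (G c ⊔ Submodule.span ℝ {x}) = ⊤)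
    (v v' : Vec d) (hv : G (c+1) = G c ⊔ Submodule.span ℝ {v})
    (hv' : G' (c+1) = G c ⊔ Submodule.span ℝ {v'})
    (hr : ∀ a b, a + b + c + 1 = d → 1 ≤ a → φ a v ≠ 0 → φ (a-1) v ≠ 0 → φ a v' ≠ 0 →
      φ (a-1) v' ≠ 0 → φ (a-1) v * φ a v' = φ (a-1) v' * φ a v) :
    G (c+1) = G' (c+1) := by
  have nz : ∀ a b, a + b + c + 1 = d → φ a v ≠ 0 := by
    intro a b hab
    rw [hφ a b hab, ← hv, hm.top (by omega)]
  have nz' : ∀ a b, a + b + c + 1 = d → φ a v' ≠ 0 := by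
    intro a b hab
    rw [hφ a b hab, ← hv', hm'.top (by omega)]
  set l := φ 0 v' / φ 0 v with hl
  have n0 := nz 0 (d-c-1) (by omega)
  have n0' := nz' 0 (d-c-1) (by omega)
  have hl0 : l ≠ 0 := div_ne_zero n0' n0
  have prop : ∀ a b, a + b + c + 1 = d → φ a v' = l * φ a v := by
    intro a
    induction a with
    | zero => intro b hb; rw [hl]; field_simp
    | succ a ih =>
      intro b hb
      have h1 := ih (b+1) (by omega)
      have na := nz a (b+1) (by omega)
      have h2 := hr (a+1) b hb (by omega) (nz _ b hb) na (nz' _ b hb)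
        (nz' a (b+1) (by omega))
      simp only [Nat.add_sub_cancel] at h2
      rw [h1] at h2
      apply mul_left_cancel₀ na
      rw [h2]; ring
  have hw : v' - l • v ∈ G c := by
    apply core hE hF hG hm hc
    intro a b hab
    by_contra hcon
    have h0 : φ a (v' - l • v) = 0 := by
      rw [map_sub, map_smul, prop a b hab]; simp
    have h1 := fun ht => (hφ a b hab (v' - l • v)).2 ht h0
    apply h1
    apply Submodule.eq_top_of_finrank_eq
    have h2 : E a ⊔ F b ⊔ G c < E a ⊔ F b ⊔ (G c ⊔ Submodule.span ℝ {v' - l • v}) := by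
      refine lt_of_le_of_ne (sup_le_sup_left le_sup_left _) ?_
      intro hh
      apply hcon
      rw [hh]
      exact le_sup_right (a := E a ⊔ F b) (le_sup_right (a := G c) (Submodule.mem_span_singleton_self _))
    have h3 := Submodule.finrank_lt_finrank_of_lt h2
    rw [hm a b c (by omega) (by omega) (by omega)] at h3
    have h4 := Submodule.finrank_le (E a ⊔ F b ⊔ (G c ⊔ Submodule.span ℝ {v' - l • v}))
    simp at h4 ⊢
    omega
  symm
  apply Submodule.eq_of_le_of_finrank_eq
  · rw [hv', hv]
    refine sup_le le_sup_left ?_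
    rw [Submodule.span_singleton_le_iff_mem]
    have : v' = (v' - l • v) + l • v := by abel
    rw [this]
    exact Submodule.add_mem_sup hw (Submodule.smul_mem _ _ (Submodule.mem_span_singleton_self _))
  · rw [hG.2 _ hc, hG'.2 _ hc]

lemma exists_choice {d : ℕ} {G : ℕ → Submodule ℝ (Vec d)} (hG : IsFlag G) :
    ∃ g, ChoiceFor G g := by
  have : ∀ k, ∃ g : Fin k → Vec d, k ≤ d → Submodule.span ℝ (Set.range g) = G k := by
    intro k
    by_cases hk : k ≤ d
    · let b := Module.finBasisOfFinrankEq ℝ (G k) (hG.2 k hk)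
      refine ⟨fun i => (b i : Vec d), fun _ => ?_⟩
      have : Set.range (fun i => (b i : Vec d)) = (G k).subtype '' Set.range b := by
        rw [← Set.range_comp]; rfl
      rw [this, ← Submodule.map_span, b.span_eq, Submodule.map_top, Submodule.range_subtype]
    · exact ⟨fun _ => 0, fun h => absurd h hk⟩
  choose g hg using this
  exact ⟨g, hg⟩

lemma ext_choice {d : ℕ} {G : ℕ → Submodule ℝ (Vec d)} (hG : IsFlag G) {c : ℕ}
    (g0 : (k : ℕ) → Fin k → Vec d) (hc : c + 1 ≤ d)
    (hg0 : ∀ k, k ≤ c → Submodule.span ℝ (Set.range (g0 k)) = G k) (x : Vec d)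
    (hx : G (c+1) = G c ⊔ Submodule.span ℝ {x}) :
    ∃ g, ChoiceFor G g ∧ (∀ k, k ≤ c → g k = g0 k) ∧ g (c+1) = Fin.snoc (g0 c) x := by
  obtain ⟨g1, hg1⟩ := exists_choice hG
  refine ⟨Function.update (fun k => if k ≤ c then g0 k else g1 k) (c+1) (Fin.snoc (g0 c) x),
    ?_, ?_, by simp⟩
  · intro k hk
    by_cases h1 : k = c + 1
    · subst h1
      rw [Function.update_self, Fin.range_snoc, Submodule.span_insert, hg0 c le_rfl, hx, sup_comm]
    · rw [Function.update_of_ne h1]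
      by_cases h2 : k ≤ c
      · rw [if_pos h2, hg0 k h2]
      · rw [if_neg h2, hg1 k hk]
  · intro k hk
    rw [Function.update_of_ne (by omega), if_pos hk]

lemma ext_of_mem {d : ℕ} {G : ℕ → Submodule ℝ (Vec d)} (hG : IsFlag G) {c : ℕ} (hc : c + 1 ≤ d)
    {v : Vec d} (hv : v ∈ G (c+1)) (hv' : v ∉ G c) :
    G (c+1) = G c ⊔ Submodule.span ℝ {v} := by
  symm
  have hle : G c ⊔ Submodule.span ℝ {v} ≤ G (c+1) :=
    sup_le (hG.1 (Nat.le_succ c)) ((Submodule.span_singleton_le_iff_mem _ _).2 hv)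
  apply Submodule.eq_of_le_of_finrank_le hle
  have h2 : G c < G c ⊔ Submodule.span ℝ {v} := by
    refine lt_of_le_of_ne le_sup_left ?_
    intro hh
    apply hv'
    rw [hh]
    exact le_sup_right (a := G c) (Submodule.mem_span_singleton_self _)
  have h3 := Submodule.finrank_lt_finrank_of_lt h2
  rw [hG.2 c (by omega)] at h3
  rw [hG.2 _ hc]
  omega

lemma exists_ext {d : ℕ} {G : ℕ → Submodule ℝ (Vec d)} (hG : IsFlag G) {c : ℕ} (hc : c + 1 ≤ d) :
    ∃ v, G (c+1) = G c ⊔ Submodule.span ℝ {v} := by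
  have hlt : G c < G (c+1) := by
    refine lt_of_le_of_ne (hG.1 (Nat.le_succ c)) ?_
    intro h
    have h1 := hG.2 c (by omega)
    rw [h, hG.2 _ hc] at h1
    omega
  obtain ⟨v, hv, hv'⟩ := SetLike.exists_of_lt hlt
  exact ⟨v, ext_of_mem hG hc hv hv'⟩

lemma alg1 {A A' B B' P Q R S : ℝ} (hB : B ≠ 0) (hB' : B' ≠ 0) (hP : P ≠ 0) (hQ : Q ≠ 0)
    (hR : R ≠ 0) (hS : S ≠ 0) (h : A * P * Q / (R * B * S) = A' * P * Q / (R * B' * S)) :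
    A * B' = A' * B := by
  rw [div_eq_div_iff (by positivity) (by positivity)] at h
  have : P * Q * R * S ≠ 0 := by positivity
  apply mul_left_cancel₀ this
  linear_combination h

lemma alg2 {A A' B B' P Q R S : ℝ} (hB : B ≠ 0) (hB' : B' ≠ 0) (hP : P ≠ 0) (hQ : Q ≠ 0)
    (hR : R ≠ 0) (hS : S ≠ 0) (h : P * A * Q / (R * S * B) = P * A' * Q / (R * S * B')) :
    A * B' = A' * B := by
  rw [div_eq_div_iff (by positivity) (by positivity)] at h
  have : P * Q * R * S ≠ 0 := by positivity
  apply mul_left_cancel₀ this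
  linear_combination h

lemma wedge_choice_ne {d : ℕ} {E F G : ℕ → Submodule ℝ (Vec d)} (hm : Max3 E F G)
    {e f g : (k : ℕ) → Fin k → Vec d} (he : ChoiceFor E e) (hf : ChoiceFor F f)
    (hg : ChoiceFor G g) {a b c : ℕ} (h : a + b + c = d) : wedgeDet (e a) (f b) (g c) ≠ 0 := by
  rw [wedgeDet_ne_zero_iff _ _ _ h, he a (by omega), hf b (by omega), hg c (by omega), hm.top h]

lemma uniq_right {d : ℕ} {E F G G' : ℕ → Submodule ℝ (Vec d)} (hE : IsFlag E) (hF : IsFlag F)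
    (hG : IsFlag G) (hG' : IsFlag G') (hm : Max3 E F G) (hm' : Max3 E F G')
    (h1 : G 1 = G' 1)
    (ht : ∀ a b c : ℕ, 1 ≤ a → 1 ≤ b → 1 ≤ c → a + b + c = d →
      ∀ e f g g' : (k : ℕ) → Fin k → Vec d,
        ChoiceFor E e → ChoiceFor F f → ChoiceFor G g → ChoiceFor G' g' →
        tripleRatio a b c e f g = tripleRatio a b c e f g') :
    ∀ k, k ≤ d → G k = G' k := by
  intro k
  induction k using Nat.strong_induction_on with
  | _ k ih =>
  intro hk
  rcases k with _ | c
  · rw [hG.zero, hG'.zero]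
  rcases Nat.eq_zero_or_pos c with rfl | hc
  · exact h1
  obtain ⟨e, he⟩ := exists_choice hE
  obtain ⟨f, hf⟩ := exists_choice hF
  obtain ⟨g0, hg0⟩ := exists_choice hG
  obtain ⟨v, hv⟩ := exists_ext hG hk
  obtain ⟨v', hv'⟩ := exists_ext hG' hk
  obtain ⟨g, hg, hgk, hgc⟩ := ext_choice hG g0 hk (fun k hk => hg0 k (by omega)) v hv
  obtain ⟨g', hg', hgk', hgc'⟩ := ext_choice hG' g0 hk
    (fun k hk => (hg0 k (by omega)).trans (ih k (by omega) (by omega))) v' hv'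
  have hK := ih c (by omega) (by omega)
  have hex : ∀ a, ∃ φ : Vec d →ₗ[ℝ] ℝ, ∀ b, a + b + c + 1 = d → ∀ x,
      φ x = wedgeDet (e a) (f b) (Fin.snoc (g0 c) x : Fin (c+1) → Vec d) := by
    intro a
    by_cases h : a + (d - c - 1 - a) + (c + 1) = d
    · obtain ⟨φ, hφ⟩ := wedge_right_linear (e a) (f (d - c - 1 - a)) (g0 c) h
      refine ⟨φ, fun b hb => ?_⟩
      obtain rfl : b = d - c - 1 - a := by omega
      exact hφ
    · exact ⟨0, fun b hb => absurd hb (by omega)⟩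
  choose φ hφ using hex
  refine step hE hF hG hG' hm hm' hk hK φ ?_ v v' hv (hK ▸ hv') ?_
  · intro a b hab x
    rw [hφ a b hab, wedgeDet_ne_zero_iff _ _ _ (by omega), he a (by omega), hf b (by omega),
      Fin.range_snoc, Submodule.span_insert, hg0 c (by omega), sup_comm (G c)]
  · intro a b hab ha n1 n2 n3 n4
    have key := ht a (b+1) c ha (by omega) hc (by omega) e f g g' he hf hg hg'
    have hgg : g c = g' c := (hgk c le_rfl).trans (hgk' c le_rfl).symm
    have hgg1 : g (c-1) = g' (c-1) := (hgk _ (by omega)).trans (hgk' _ (by omega)).symm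
    unfold tripleRatio at key
    rw [← hgg, ← hgg1, hgc, hgc', ← hφ (a-1) (b+1) (by omega), ← hφ (a-1) (b+1) (by omega)] at key
    rw [← hφ a (b+1-1) (by omega), ← hφ a (b+1-1) (by omega)] at key
    refine alg1 n1 n3 ?_ ?_ ?_ ?_ key
    all_goals exact wedge_choice_ne hm he hf hg (by omega)

lemma uniq_mid {d : ℕ} {E F G G' : ℕ → Submodule ℝ (Vec d)} (hE : IsFlag E) (hF : IsFlag F)
    (hG : IsFlag G) (hG' : IsFlag G') (hm : Max3 E F G) (hm' : Max3 E F G')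
    (h1 : G 1 = G' 1)
    (ht : ∀ a b c : ℕ, 1 ≤ a → 1 ≤ b → 1 ≤ c → a + b + c = d →
      ∀ e f g g' : (k : ℕ) → Fin k → Vec d,
        ChoiceFor E e → ChoiceFor F f → ChoiceFor G g → ChoiceFor G' g' →
        tripleRatio a b c e g f = tripleRatio a b c e g' f) :
    ∀ k, k ≤ d → G k = G' k := by
  intro k
  induction k using Nat.strong_induction_on with
  | _ k ih =>
  intro hk
  rcases k with _ | c
  · rw [hG.zero, hG'.zero]
  rcases Nat.eq_zero_or_pos c with rfl | hc
  · exact h1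
  obtain ⟨e, he⟩ := exists_choice hE
  obtain ⟨f, hf⟩ := exists_choice hF
  obtain ⟨g0, hg0⟩ := exists_choice hG
  obtain ⟨v, hv⟩ := exists_ext hG hk
  obtain ⟨v', hv'⟩ := exists_ext hG' hk
  obtain ⟨g, hg, hgk, hgc⟩ := ext_choice hG g0 hk (fun k hk => hg0 k (by omega)) v hv
  obtain ⟨g', hg', hgk', hgc'⟩ := ext_choice hG' g0 hk
    (fun k hk => (hg0 k (by omega)).trans (ih k (by omega) (by omega))) v' hv'
  have hK := ih c (by omega) (by omega)
  have hex : ∀ a, ∃ φ : Vec d →ₗ[ℝ] ℝ, ∀ b, a + b + c + 1 = d → ∀ x,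
      φ x = wedgeDet (e a) (Fin.snoc (g0 c) x : Fin (c+1) → Vec d) (f b) := by
    intro a
    by_cases h : a + (c + 1) + (d - c - 1 - a) = d
    · obtain ⟨φ, hφ⟩ := wedge_mid_linear (e a) (g0 c) (f (d - c - 1 - a)) h
      refine ⟨φ, fun b hb => ?_⟩
      obtain rfl : b = d - c - 1 - a := by omega
      exact hφ
    · exact ⟨0, fun b hb => absurd hb (by omega)⟩
  choose φ hφ using hex
  refine step hE hF hG hG' hm hm' hk hK φ ?_ v v' hv (hK ▸ hv') ?_
  · intro a b hab x
    rw [hφ a b hab, wedgeDet_ne_zero_iff _ _ _ (by omega), he a (by omega), hf b (by omega),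
      Fin.range_snoc, Submodule.span_insert, hg0 c (by omega), sup_comm (G c), sup_right_comm]
  · intro a b hab ha n1 n2 n3 n4
    have key := ht a c (b+1) ha hc (by omega) (by omega) e f g g' he hf hg hg'
    have hgg : g c = g' c := (hgk c le_rfl).trans (hgk' c le_rfl).symm
    have hgg1 : g (c-1) = g' (c-1) := (hgk _ (by omega)).trans (hgk' _ (by omega)).symm
    unfold tripleRatio at key
    rw [← hgg, ← hgg1, hgc, hgc', ← hφ (a-1) (b+1) (by omega), ← hφ (a-1) (b+1) (by omega)] at key
    rw [← hφ a (b+1-1) (by omega), ← hφ a (b+1-1) (by omega)] at key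
    have := alg2 n2 n4 ?_ ?_ ?_ ?_ key
    · linear_combination -this
    all_goals exact wedge_choice_ne hm.swap he hg hf (by omega)

lemma snoc_zero_eq {α : Type*} (g : Fin 0 → α) (x : α) : (![x] : Fin 1 → α) = Fin.snoc g x := by
  funext i
  obtain rfl : i = Fin.last 0 := Subsingleton.elim _ _
  rw [Fin.snoc_last]; rfl

lemma uniq_double {d : ℕ} (hd : 1 ≤ d) {E F G H H' : ℕ → Submodule ℝ (Vec d)} (hE : IsFlag E)
    (hG : IsFlag G) (hF : IsFlag F)
    (hH : IsFlag H) (hH' : IsFlag H') (hm : Max3 E G H) (hm' : Max3 E G H') (hmF : Max3 E G F)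
    (ht : ∀ i : ℕ, 1 ≤ i → i < d →
      ∀ (e g : (k : ℕ) → Fin k → Vec d) (f1 h1 h1' : Vec d),
        ChoiceFor E e → ChoiceFor G g →
        f1 ∈ F 1 → f1 ≠ 0 → h1 ∈ H 1 → h1 ≠ 0 → h1' ∈ H' 1 → h1' ≠ 0 →
        doubleRatio i e g f1 h1 = doubleRatio i e g f1 h1') : H 1 = H' 1 := by
  obtain ⟨e, he⟩ := exists_choice hE
  obtain ⟨g, hg⟩ := exists_choice hG
  obtain ⟨v, hv⟩ := exists_ext hH (c := 0) hd
  obtain ⟨v', hv'⟩ := exists_ext hH' (c := 0) hd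
  obtain ⟨f1, hf1⟩ := exists_ext hF (c := 0) hd
  have mem : ∀ {A : ℕ → Submodule ℝ (Vec d)} {x : Vec d}, IsFlag A →
      A (0+1) = A 0 ⊔ Submodule.span ℝ {x} → x ∈ A 1 ∧ x ≠ 0 := by
    intro A x hA h
    rw [hA.zero, bot_sup_eq] at h
    refine ⟨?_, ?_⟩
    · change x ∈ A (0+1)
      rw [h]; exact Submodule.mem_span_singleton_self _
    · rintro rfl
      have := hA.2 1 hd
      change Module.finrank ℝ (A (0+1)) = 1 at this
      rw [h, Submodule.span_zero_singleton, finrank_bot] at this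
      omega
  have hex : ∀ a, ∃ φ : Vec d →ₗ[ℝ] ℝ, ∀ b, a + b + 0 + 1 = d → ∀ x,
      φ x = wedgeDet (e a) (g b) ![x] := by
    intro a
    by_cases h : a + (d - 1 - a) + (0 + 1) = d
    · obtain ⟨φ, hφ⟩ := wedge_right_linear (e a) (g (d - 1 - a)) Fin.elim0 h
      refine ⟨φ, fun b hb => ?_⟩
      obtain rfl : b = d - 1 - a := by omega
      intro x
      rw [hφ, snoc_zero_eq]
    · exact ⟨0, fun b hb => absurd hb (by omega)⟩
  choose φ hφ using hex
  have hchar : ∀ a b, a + b + 0 + 1 = d → ∀ x, φ a x ≠ 0 ↔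
      E a ⊔ G b ⊔ Submodule.span ℝ {x} = ⊤ := by
    intro a b hab x
    rw [hφ a b hab, wedgeDet_ne_zero_iff _ _ _ (by omega), he a (by omega), hg b (by omega)]
    simp
  have nf : ∀ a b, a + b + 0 + 1 = d → φ a f1 ≠ 0 := by
    intro a b hab
    rw [hchar a b hab]
    have := hmF.top (a := a) (b := b) (c := 0+1) (by omega)
    rwa [hf1, hF.zero, bot_sup_eq] at this
  refine step (c := 0) hE hG hH hH' hm hm' hd (by rw [hH.zero, hH'.zero]) φ ?_ v v' hv
    (by rw [hv', hH.zero, hH'.zero]) ?_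
  · intro a b hab x
    rw [hchar a b hab, hH.zero, bot_sup_eq]
  · intro a b hab ha n1 n2 n3 n4
    have key := ht a ha (by omega) e g f1 v v' he hg (mem hF hf1).1 (mem hF hf1).2
      (mem hH hv).1 (mem hH hv).2 (mem hH' hv').1 (mem hH' hv').2
    unfold doubleRatio at key
    rw [neg_inj, ← hφ a _ (by omega), ← hφ a _ (by omega), ← hφ a _ (by omega), ← hφ (a-1) _ (by omega),
      ← hφ (a-1) _ (by omega), ← hφ (a-1) _ (by omega)] at key
    have f1n := nf a b hab
    have f2n := nf (a-1) (b+1) (by omega)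
    rw [div_eq_div_iff (mul_ne_zero n1 f2n) (mul_ne_zero n3 f2n)] at key
    apply mul_left_cancel₀ (mul_ne_zero f1n f2n)
    linear_combination key

lemma max4 {d : ℕ} {E F G H : ℕ → Submodule ℝ (Vec d)} (h : MaxSpan ![E, F, G, H]) :
    ∀ a b c e, a ≤ d → b ≤ d → c ≤ d → e ≤ d →
      Module.finrank ℝ ↥(E a ⊔ F b ⊔ G c ⊔ H e) = min (a + b + c + e) d := by
  intro a b c e ha hb hc he
  have h1 := h ![a, b, c, e] (by intro j; fin_cases j <;> simpa)
  have h2 : (⨆ j, (![E, F, G, H] : Fin 4 → ℕ → Submodule ℝ (Vec d)) j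
      ((![a, b, c, e] : Fin 4 → ℕ) j)) = E a ⊔ F b ⊔ G c ⊔ H e := by
    apply le_antisymm
    · refine iSup_le fun j => ?_
      fin_cases j
      · exact le_sup_left.trans (le_sup_left.trans le_sup_left)
      · exact le_sup_right.trans (le_sup_left.trans le_sup_left)
      · exact le_sup_right.trans le_sup_left
      · exact le_sup_right
    · refine sup_le (sup_le (sup_le ?_ ?_) ?_) ?_
      · exact le_iSup_of_le 0 le_rfl
      · exact le_iSup_of_le 1 le_rfl
      · exact le_iSup_of_le 2 le_rfl
      · exact le_iSup_of_le 3 le_rfl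
  rw [h2] at h1
  rw [h1, Fin.sum_univ_four]
  rfl

lemma max3_EFG {d : ℕ} {E F G H : ℕ → Submodule ℝ (Vec d)}
    (h : ∀ a b c e, a ≤ d → b ≤ d → c ≤ d → e ≤ d →
      Module.finrank ℝ ↥(E a ⊔ F b ⊔ G c ⊔ H e) = min (a + b + c + e) d) (hH : IsFlag H) :
    Max3 E F G := by
  intro a b c ha hb hc
  have := h a b c 0 ha hb hc (by omega)
  rwa [hH.zero, sup_bot_eq] at this

lemma max3_EFH {d : ℕ} {E F G H : ℕ → Submodule ℝ (Vec d)}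
    (h : ∀ a b c e, a ≤ d → b ≤ d → c ≤ d → e ≤ d →
      Module.finrank ℝ ↥(E a ⊔ F b ⊔ G c ⊔ H e) = min (a + b + c + e) d) (hG : IsFlag G) :
    Max3 E F H := by
  intro a b c ha hb hc
  have := h a b 0 c ha hb (by omega) hc
  rwa [hG.zero, sup_bot_eq] at this

lemma max3_EGH {d : ℕ} {E F G H : ℕ → Submodule ℝ (Vec d)}
    (h : ∀ a b c e, a ≤ d → b ≤ d → c ≤ d → e ≤ d →
      Module.finrank ℝ ↥(E a ⊔ F b ⊔ G c ⊔ H e) = min (a + b + c + e) d) (hF : IsFlag F) :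
    Max3 E G H := by
  intro a b c ha hb hc
  have := h a 0 b c ha (by omega) hb hc
  rwa [hF.zero, sup_bot_eq, add_zero] at this

lemma IsFlag.map {d : ℕ} {E : ℕ → Submodule ℝ (Vec d)} (hE : IsFlag E)
    (T : Vec d ≃ₗ[ℝ] Vec d) : IsFlag (fun k => (E k).map (T : Vec d →ₗ[ℝ] Vec d)) := by
  refine ⟨fun i j hij => Submodule.map_mono (hE.1 hij), fun i hi => ?_⟩
  exact (LinearEquiv.finrank_map_eq T (E i)).trans (hE.2 i hi)

lemma Max3.map {d : ℕ} {A B C A' B' C' : ℕ → Submodule ℝ (Vec d)} (h : Max3 A B C)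
    (T : Vec d ≃ₗ[ℝ] Vec d) (hA : ∀ k, k ≤ d → (A k).map (T : Vec d →ₗ[ℝ] Vec d) = A' k)
    (hB : ∀ k, k ≤ d → (B k).map (T : Vec d →ₗ[ℝ] Vec d) = B' k)
    (hC : ∀ k, k ≤ d → (C k).map (T : Vec d →ₗ[ℝ] Vec d) = C' k) : Max3 A' B' C' := by
  intro a b c ha hb hc
  rw [← hA a ha, ← hB b hb, ← hC c hc, ← Submodule.map_sup, ← Submodule.map_sup,
    ← h a b c ha hb hc]
  exact LinearEquiv.finrank_map_eq T _

lemma choice_symm {d : ℕ} {A A' : ℕ → Submodule ℝ (Vec d)} (T : Vec d ≃ₗ[ℝ] Vec d)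
    (hA : ∀ k, k ≤ d → (A k).map (T : Vec d →ₗ[ℝ] Vec d) = A' k)
    {e : (k : ℕ) → Fin k → Vec d} (he : ChoiceFor A' e) :
    ChoiceFor A (fun k i => T.symm (e k i)) := by
  intro k hk
  have h1 : Set.range (fun i => T.symm (e k i)) =
      (T.symm : Vec d →ₗ[ℝ] Vec d) '' Set.range (e k) := by
    rw [← Set.range_comp]; rfl
  rw [h1, ← Submodule.map_span, he k hk, ← hA k hk, ← Submodule.map_comp]
  simp

lemma detT_ne {d : ℕ} (T : Vec d ≃ₗ[ℝ] Vec d) : LinearMap.det (T : Vec d →ₗ[ℝ] Vec d) ≠ 0 :=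
  (LinearEquiv.isUnit_det' T).ne_zero

lemma tripleRatio_symm {d : ℕ} (T : Vec d ≃ₗ[ℝ] Vec d) (a b c : ℕ)
    (e f g : (k : ℕ) → Fin k → Vec d) :
    tripleRatio a b c (fun k i => T.symm (e k i)) (fun k i => T.symm (f k i))
      (fun k i => T.symm (g k i)) = tripleRatio a b c e f g := by
  unfold tripleRatio
  simp only [wedgeDet_map]
  have := detT_ne T.symm
  set δ := LinearMap.det (T.symm : Vec d →ₗ[ℝ] Vec d)
  rw [show ∀ x y z : ℝ, δ * x * (δ * y) * (δ * z) = δ ^ 3 * (x * y * z) by intros; ring,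
    show ∀ x y z : ℝ, δ * x * (δ * y) * (δ * z) = δ ^ 3 * (x * y * z) by intros; ring,
    mul_div_mul_left _ _ (pow_ne_zero 3 this)]

lemma doubleRatio_symm {d : ℕ} (T : Vec d ≃ₗ[ℝ] Vec d) (i : ℕ)
    (e g : (k : ℕ) → Fin k → Vec d) (f1 h1 : Vec d) :
    doubleRatio i (fun k i => T.symm (e k i)) (fun k i => T.symm (g k i)) (T.symm f1)
      (T.symm h1) = doubleRatio i e g f1 h1 := by
  unfold doubleRatio
  have hx : ∀ x : Vec d, (![T.symm x] : Fin 1 → Vec d) = fun j => T.symm ((![x] : Fin 1 → Vec d) j) := by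
    intro x; funext j; fin_cases j; rfl
  rw [hx, hx]
  simp only [wedgeDet_map]
  have := detT_ne T.symm
  set δ := LinearMap.det (T.symm : Vec d →ₗ[ℝ] Vec d)
  rw [show ∀ x y : ℝ, δ * x * (δ * y) = δ ^ 2 * (x * y) by intros; ring,
    show ∀ x y : ℝ, δ * x * (δ * y) = δ ^ 2 * (x * y) by intros; ring,
    mul_div_mul_left _ _ (pow_ne_zero 2 this)]

lemma frame {d : ℕ} (hd : 1 ≤ d) {E F G : ℕ → Submodule ℝ (Vec d)} (hE : IsFlag E)
    (hF : IsFlag F) (hG : IsFlag G) (hm : Max3 E F G) :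
    ∃ b : Module.Basis (Fin d) ℝ (Vec d), (∀ i : Fin d, b i ∈ E (i+1) ∧ b i ∉ E i ∧ b i ∈ F (d - i) ∧
      b i ∉ F (d - i - 1)) ∧ G 1 = Submodule.span ℝ {∑ i, b i} := by
  have hex : ∀ i : Fin d, ∃ x, x ∈ E (i+1) ⊓ F (d-i) ∧ x ≠ 0 := by
    intro i
    have hi := i.2
    refine Submodule.exists_mem_ne_zero_of_ne_bot ?_
    intro hbot
    have h1 := Submodule.finrank_sup_add_finrank_inf_eq (E (i+1)) (F (d-i))
    have h2 := Submodule.finrank_le (E (i+1) ⊔ F (d-i))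
    rw [hbot, finrank_bot, hE.2 _ (by omega), hF.2 _ (by omega)] at h1
    simp at h2
    omega
  choose b0 hb0 hne using hex
  have dj : ∀ i j, i + j ≤ d → E i ⊓ F j = ⊥ := by
    intro i j hij
    have := hm.disj hE hF hG (a := i) (b := j) (c := 0) (by omega)
    rwa [hG.zero, sup_bot_eq] at this
  have hnE : ∀ i : Fin d, b0 i ∉ E i := by
    intro i hi
    have : b0 i ∈ E i ⊓ F (d-i) := ⟨hi, (hb0 i).2⟩
    rw [dj _ _ (by omega)] at this
    exact hne i this
  have hnF : ∀ i : Fin d, b0 i ∉ F (d - i - 1) := by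
    intro i hi
    have : b0 i ∈ E (i+1) ⊓ F (d-i-1) := ⟨(hb0 i).1, hi⟩
    rw [dj _ _ (by omega)] at this
    exact hne i this
  have hsp : ∀ k, k ≤ d → E k ≤ Submodule.span ℝ (Set.range b0) := by
    intro k
    induction k with
    | zero => intro _; rw [hE.zero]; exact bot_le
    | succ k ih =>
      intro hk
      rw [ext_of_mem hE hk (hb0 ⟨k, hk⟩).1 (hnE ⟨k, hk⟩)]
      refine sup_le (ih (by omega)) ?_
      rw [Submodule.span_singleton_le_iff_mem]
      exact Submodule.subset_span ⟨_, rfl⟩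
  have htop : ⊤ ≤ Submodule.span ℝ (Set.range b0) := by
    rw [← hE.top]; exact hsp d le_rfl
  let B := Module.Basis.mk
    (linearIndependent_of_top_le_span_of_card_eq_finrank htop (by simp)) htop
  have hB : ∀ i, B i = b0 i := fun i => by simp [B]
  obtain ⟨g, hg⟩ := exists_ext hG (c := 0) hd
  rw [hG.zero, bot_sup_eq] at hg
  have hc : ∀ i, B.repr g i ≠ 0 := by
    intro i hi
    have hi2 := i.2
    have hgm : g ∈ E i ⊔ F (d - i - 1) := by
      rw [← B.sum_repr g]
      refine Submodule.sum_mem _ fun j _ => ?_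
      rcases lt_trichotomy (j : ℕ) i with h | h | h
      · apply Submodule.smul_mem
        rw [hB]
        exact le_sup_left (a := E i) (hE.1 (by omega) (hb0 j).1)
      · obtain rfl : j = i := Fin.ext h
        rw [hi, zero_smul]; exact Submodule.zero_mem _
      · apply Submodule.smul_mem
        rw [hB]
        exact le_sup_right (a := E i) (hF.1 (by omega) (hb0 j).2)
    have h1 := hm i (d - i - 1) 1 (by omega) (by omega) hd
    have h2 := hm i (d - i - 1) 0 (by omega) (by omega) (by omega)
    rw [hG.zero, sup_bot_eq] at h2
    change Module.finrank ℝ ↥(E i ⊔ F (d - i - 1) ⊔ G (0 + 1)) = _ at h1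
    rw [hg, sup_eq_left.2 ((Submodule.span_singleton_le_iff_mem _ _).2 hgm), h2] at h1
    omega
  refine ⟨B.isUnitSMul (w := fun i => B.repr g i) (fun i => (hc i).isUnit), ?_, ?_⟩
  · intro i
    rw [Module.Basis.isUnitSMul_apply, hB]
    simp only [Submodule.smul_mem_iff _ (hc i)]
    exact ⟨(hb0 i).1, hnE i, (hb0 i).2, hnF i⟩
  · change G (0 + 1) = _
    rw [hg]
    simp only [Module.Basis.isUnitSMul_apply, B.sum_repr]

lemma map_flag {d : ℕ} {E E' : ℕ → Submodule ℝ (Vec d)} (hE : IsFlag E) (hE' : IsFlag E')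
    (T : Vec d ≃ₗ[ℝ] Vec d) (b : ℕ → Vec d) (h1 : ∀ i, i < d → b i ∈ E (i+1))
    (h2 : ∀ i, i < d → b i ∉ E i) (h3 : ∀ i, i < d → T (b i) ∈ E' (i+1)) :
    ∀ k, k ≤ d → (E k).map (T : Vec d →ₗ[ℝ] Vec d) = E' k := by
  have hle : ∀ k, k ≤ d → (E k).map (T : Vec d →ₗ[ℝ] Vec d) ≤ E' k := by
    intro k
    induction k with
    | zero => intro _; rw [hE.zero, Submodule.map_bot]; exact bot_le
    | succ k ih =>
      intro hk
      rw [ext_of_mem hE hk (h1 k hk) (h2 k hk), Submodule.map_sup]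
      refine sup_le ((ih (by omega)).trans (hE'.1 (Nat.le_succ k))) ?_
      rw [Submodule.map_span, Set.image_singleton, Submodule.span_singleton_le_iff_mem]
      exact h3 k hk
  intro k hk
  apply Submodule.eq_of_le_of_finrank_eq (hle k hk)
  rw [hE'.2 k hk]
  exact (hE.map T).2 k hk

lemma exists_T {d : ℕ} (hd : 1 ≤ d) {E F G E' F' G' : ℕ → Submodule ℝ (Vec d)} (hE : IsFlag E)
    (hF : IsFlag F) (hG : IsFlag G) (hE' : IsFlag E') (hF' : IsFlag F') (hG' : IsFlag G')
    (hm : Max3 E F G) (hm' : Max3 E' F' G') :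
    ∃ T : Vec d ≃ₗ[ℝ] Vec d, (∀ k, k ≤ d → (E k).map (T : Vec d →ₗ[ℝ] Vec d) = E' k) ∧
      (∀ k, k ≤ d → (F k).map (T : Vec d →ₗ[ℝ] Vec d) = F' k) ∧
      (G 1).map (T : Vec d →ₗ[ℝ] Vec d) = G' 1 := by
  obtain ⟨b, hb, hbG⟩ := frame hd hE hF hG hm
  obtain ⟨b', hb', hbG'⟩ := frame hd hE' hF' hG' hm'
  let T := b.equiv b' (Equiv.refl _)
  have hT : ∀ i, T (b i) = b' i := fun i => by simp [T]
  refine ⟨T, ?_, ?_, ?_⟩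
  · refine map_flag hE hE' T (fun i => if h : i < d then b ⟨i, h⟩ else 0) ?_ ?_ ?_ <;>
      intro i hi <;> simp only [dif_pos hi]
    · exact (hb ⟨i, hi⟩).1
    · exact (hb ⟨i, hi⟩).2.1
    · rw [hT]; exact (hb' ⟨i, hi⟩).1
  · have e1 : ∀ i, i < d → d - (d - 1 - i) = i + 1 := by intro i hi; omega
    have e2 : ∀ i, i < d → d - (d - 1 - i) - 1 = i := by intro i hi; omega
    refine map_flag hF hF' T (fun i => if h : d - 1 - i < d then b ⟨d - 1 - i, h⟩ else 0) ?_ ?_ ?_ <;>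
      intro i hi <;> have hi' : d - 1 - i < d := by omega
    all_goals simp only [dif_pos hi']
    · have := (hb ⟨d - 1 - i, hi'⟩).2.2.1
      rwa [e1 i hi] at this
    · have := (hb ⟨d - 1 - i, hi'⟩).2.2.2
      rwa [e2 i hi] at this
    · have := (hb' ⟨d - 1 - i, hi'⟩).2.2.1
      rw [e1 i hi] at this
      rwa [hT]
  · rw [hbG, hbG', Submodule.map_span, Set.image_singleton]
    congr 2
    simp [hT]

/-- Theorem 2.8 (Fock–Goncharov): a configuration of four maximum span flags
`(E,F,G,H)` is determined by the triple ratios `X_{a,b,c}(E,F,G)`,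
`X_{a,b,c}(E,H,F)` for `(a,b,c) ∈ Θ°_d` and the double ratios `Z_i(E,F,G,H)` for
`0 < i < d`: two quadruples with the same invariants differ by an element of
`GL(d,ℝ)`. -/
theorem stmt16 {d : ℕ} (hd : 3 ≤ d)
    (E F G H E' F' G' H' : ℕ → Submodule ℝ (Vec d))
    (hE : IsFlag E) (hF : IsFlag F) (hG : IsFlag G) (hH : IsFlag H)
    (hE' : IsFlag E') (hF' : IsFlag F') (hG' : IsFlag G') (hH' : IsFlag H')
    (hmax : MaxSpan ![E, F, G, H]) (hmax' : MaxSpan ![E', F', G', H'])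
    (htripleEFG : ∀ a b c : ℕ, 1 ≤ a → 1 ≤ b → 1 ≤ c → a + b + c = d →
      ∀ e f g e' f' g' : (k : ℕ) → Fin k → Vec d,
        ChoiceFor E e → ChoiceFor F f → ChoiceFor G g →
        ChoiceFor E' e' → ChoiceFor F' f' → ChoiceFor G' g' →
        tripleRatio a b c e f g = tripleRatio a b c e' f' g')
    (htripleEHF : ∀ a b c : ℕ, 1 ≤ a → 1 ≤ b → 1 ≤ c → a + b + c = d →
      ∀ e h f e' h' f' : (k : ℕ) → Fin k → Vec d,
        ChoiceFor E e → ChoiceFor H h → ChoiceFor F f →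
        ChoiceFor E' e' → ChoiceFor H' h' → ChoiceFor F' f' →
        tripleRatio a b c e h f = tripleRatio a b c e' h' f')
    (hdouble : ∀ i : ℕ, 1 ≤ i → i < d →
      ∀ (e g e' g' : (k : ℕ) → Fin k → Vec d) (f1 h1 f1' h1' : Vec d),
        ChoiceFor E e → ChoiceFor G g → ChoiceFor E' e' → ChoiceFor G' g' →
        f1 ∈ F 1 → f1 ≠ 0 → h1 ∈ H 1 → h1 ≠ 0 →
        f1' ∈ F' 1 → f1' ≠ 0 → h1' ∈ H' 1 → h1' ≠ 0 →
        doubleRatio i e g f1 h1 = doubleRatio i e' g' f1' h1') :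
    ∃ T : Vec d ≃ₗ[ℝ] Vec d, ∀ i, i ≤ d →
      (E i).map (T : Vec d →ₗ[ℝ] Vec d) = E' i ∧
      (F i).map (T : Vec d →ₗ[ℝ] Vec d) = F' i ∧
      (G i).map (T : Vec d →ₗ[ℝ] Vec d) = G' i ∧
      (H i).map (T : Vec d →ₗ[ℝ] Vec d) = H' i := by
  have m4 := max4 hmax
  have m4' := max4 hmax'
  have hEFG := max3_EFG m4 hH
  have hEFG' := max3_EFG m4' hH'
  have hEFH := max3_EFH m4 hG
  have hEFH' := max3_EFH m4' hG'
  have hEGH := max3_EGH m4 hF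
  have hEGH' := max3_EGH m4' hF'
  obtain ⟨T, TE, TF, TG1⟩ := exists_T (by omega) hE hF hG hE' hF' hG' hEFG hEFG'
  refine ⟨T, ?_⟩
  have TG : ∀ k, k ≤ d → (G k).map (T : Vec d →ₗ[ℝ] Vec d) = G' k := by
    refine uniq_right hE' hF' (hG.map T) hG' (hEFG.map T TE TF (fun _ _ => rfl)) hEFG' TG1 ?_
    intro a b c ha hb hc habc e f g g' he hf hg hg'
    rw [← htripleEFG a b c ha hb hc habc _ _ _ e f g' (choice_symm T TE he) (choice_symm T TF hf)
      (choice_symm T (fun _ _ => rfl) hg) he hf hg', tripleRatio_symm]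
  have TH1 : (H 1).map (T : Vec d →ₗ[ℝ] Vec d) = H' 1 := by
    refine uniq_double (by omega) hE' hG' hF' (hH.map T) hH' (hEGH.map T TE TG (fun _ _ => rfl))
      hEGH' hEFG'.swap ?_
    intro i hi hid e g f1 h1 h1' he hg hf1 hf0 hh1 hh0 hh1' hh0'
    rw [← hdouble i hi hid _ _ e g (T.symm f1) (T.symm h1) f1 h1' (choice_symm T TE he)
      (choice_symm T TG hg) he hg ?_ (by simpa using hf0) ?_ (by simpa using hh0) hf1 hf0 hh1' hh0',
      doubleRatio_symm]
    · rw [← TF 1 (by omega)] at hf1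
      obtain ⟨y, hy, rfl⟩ := hf1
      simpa using hy
    · obtain ⟨y, hy, rfl⟩ := hh1
      simpa using hy
  have TH : ∀ k, k ≤ d → (H k).map (T : Vec d →ₗ[ℝ] Vec d) = H' k := by
    refine uniq_mid hE' hF' (hH.map T) hH' (hEFH.map T TE TF (fun _ _ => rfl)) hEFH' TH1 ?_
    intro a b c ha hb hc habc e f h h' he hf hh hh'
    rw [← htripleEHF a b c ha hb hc habc _ _ _ e h' f (choice_symm T TE he)
      (choice_symm T (fun _ _ => rfl) hh) (choice_symm T TF hf) he hh' hf, tripleRatio_symm]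
  exact fun i hi => ⟨TE i hi, TF i hi, TG i hi, TH i hi⟩
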